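/- An infinite binary sequence ω is Schnorr random with respect to the uniform Bernoulli measure if and only if it passes every total Solovay test of randomness (a Solovay test whose associated series converges with a computable rate of convergence). -/

import Mathlib

open MeasureTheory Filter

/-- The cylinder set determined by a finite binary string. -/
def Cyl (x : List Bool) : Set (ℕ → Bool) :=
  {ω | ∀ i : Fin x.length, ω i = x.get i}

/-- The length-`n` prefix of an infinite binary sequence. -/
def Pre (ω : ℕ → Bool) (n : ℕ) : List Bool := (List.range n).map ω

/-- `x` is a prefix of the infinite sequence `ω`. -/
def PrefixOf (x : List Bool) (ω : ℕ → Bool) : Prop :=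
  ∀ i : Fin x.length, ω i = x.get i

/-- `μ` is the uniform Bernoulli measure `B_{1/2}` on Cantor space. -/
def UniformMeasure (μ : Measure (ℕ → Bool)) : Prop :=
  ∀ x : List Bool, μ (Cyl x) = (2 : ENNReal)⁻¹ ^ x.length

/-- A Solovay test: a computable sequence of strings whose weights form a convergent series. -/
def SolovayTest (x : ℕ → List Bool) : Prop :=
  Computable x ∧ Summable (fun n => (2 : ℝ) ^ (-((x n).length : ℤ)))

/-- `ω` passes the Solovay test `x`: only finitely many `x n` are prefixes of `ω`. -/
def PassesSolovay (x : ℕ → List Bool) (ω : ℕ → Bool) : Prop :=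
  {n | PrefixOf (x n) ω}.Finite

/-- A total Solovay test: the series converges with a computable rate of convergence. -/
def TotalSolovayTest (x : ℕ → List Bool) : Prop :=
  SolovayTest x ∧ ∃ m : ℚ → ℕ, Computable m ∧
    ∀ δ : ℚ, 0 < δ → ∑' n : {n : ℕ // m δ ≤ n}, (2 : ℝ) ^ (-((x n.1).length : ℤ)) ≤ (δ : ℝ)

/-- The effectively open set enumerated by the `n`-th row of `f`. -/
def EffOpen (f : ℕ → ℕ → List Bool) (n : ℕ) : Set (ℕ → Bool) := ⋃ i, Cyl (f n i)

/-- A Martin-Löf test with respect to `μ`. -/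
def MLTest (μ : Measure (ℕ → Bool)) (f : ℕ → ℕ → List Bool) : Prop :=
  Computable₂ f ∧ ∀ n, μ (EffOpen f n) ≤ (2 : ENNReal)⁻¹ ^ n

/-- A Schnorr test: a Martin-Löf test whose measures are uniformly computable reals. -/
def SchnorrTest (μ : Measure (ℕ → Bool)) (f : ℕ → ℕ → List Bool) : Prop :=
  MLTest μ f ∧ ∃ g : ℕ → ℚ → ℚ, Computable₂ g ∧
    ∀ (n : ℕ) (ε : ℚ), 0 < ε → |(g n ε : ℝ) - (μ (EffOpen f n)).toReal| ≤ (ε : ℝ)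

/-- Martin-Löf randomness with respect to `μ`. -/
def MLRandom (μ : Measure (ℕ → Bool)) (ω : ℕ → Bool) : Prop :=
  ∀ f, MLTest μ f → ∃ n, ω ∉ EffOpen f n

/-- Schnorr randomness with respect to `μ`. -/
def SchnorrRandom (μ : Measure (ℕ → Bool)) (ω : ℕ → Bool) : Prop :=
  ∀ f, SchnorrTest μ f → ∃ n, ω ∉ EffOpen f n

/-- A monotone machine: a partial computable monotone map on binary strings. -/
def MonotoneMachine (ψ : List Bool →. List Bool) : Prop :=
  Partrec ψ ∧ ∀ p p' y y', y ∈ ψ p → y' ∈ ψ p' → p <+: p' → (y <+: y' ∨ y' <+: y)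

/-- `Km` is the monotone Kolmogorov complexity determined by some optimal monotone machine. -/
def IsKm (Km : List Bool → ℕ) : Prop :=
  ∃ ψ : List Bool →. List Bool, MonotoneMachine ψ ∧
    (∀ x : List Bool, ∃ p y, y ∈ ψ p ∧ x <+: y ∧ p.length = Km x) ∧
    (∀ x p y, y ∈ ψ p → x <+: y → Km x ≤ p.length) ∧
    (∀ ψ' : List Bool →. List Bool, MonotoneMachine ψ' →
      ∃ c : ℕ, ∀ x p y, y ∈ ψ' p → x <+: y → Km x ≤ p.length + c)

/-- A computable real-valued function on Cantor space. -/
def ComputableRealFn (f : (ℕ → Bool) → ℝ) : Prop :=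
  ∃ F : List Bool → ℚ → ℚ, ∃ k : ℚ → ℕ, Computable₂ F ∧ Computable k ∧
    ∀ (ω : ℕ → Bool) (ε : ℚ), 0 < ε → |(F (Pre ω (k ε)) ε : ℝ) - f ω| ≤ (ε : ℝ)

/-- A computable transformation of Cantor space, induced by a monotone machine. -/
def ComputableTrans (T : (ℕ → Bool) → (ℕ → Bool)) : Prop :=
  ∃ ψ : List Bool →. List Bool, MonotoneMachine ψ ∧
    ∀ ω : ℕ → Bool, (∀ n y, y ∈ ψ (Pre ω n) → y = Pre (T ω) y.length) ∧
      (∀ k, ∃ n y, y ∈ ψ (Pre ω n) ∧ k ≤ y.length)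

/-!
The tails `x (m n), x (m n + 1), …` of a total Solovay test `x` whose weight is at most `2^{-n}` are
the rows of a Schnorr test: by the rate of convergence, finitely many strings of a row already
approximate the measure of their union with a known error.

Conversely, if the measures of the open sets `U n` of a Schnorr test are computable, one can compute
finite stages of the enumeration of `U n` whose missing measure is as small as desired. The clopen
differences of successive stages are finite disjoint unions of cylinders of the same total weight,
so choosing the stages with missing measure at most `2^{-⟨n, k⟩}` lets all these cylinders, over all
`n` and `k`, be listed as one total Solovay test. A sequence in every `U n` lies in one of the
differences for each `n`, hence has infinitely many prefixes in this list.
-/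

/-! ### Computability of rational arithmetic -/

theorem computable_nat_count {p : ℕ → Prop} [DecidablePred p] (hp : ComputablePred p) :
    Computable (Nat.count p) := by
  have hstep : Computable fun a : ℕ × ℕ × ℕ => bif decide (p a.2.1) then a.2.2 + 1 else a.2.2 :=
    .cond (hp.decide.comp (Computable.fst.comp .snd))
      (Computable.succ.comp (Computable.snd.comp .snd)) (Computable.snd.comp .snd)
  refine (Computable.nat_rec .id (.const 0) hstep.to₂).of_eq fun n => ?_
  induction n with
  | zero => simp
  | succ n ih => by_cases hn : p n <;> simpa [Nat.count_succ, hn] using ih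

theorem computable_of_injective_comp {α β γ : Type*} [Primcodable α] [Primcodable β] [Primcodable γ]
    {e : β → γ} (he : Computable e) (hinj : Function.Injective e) {f : α → β}
    (hef : Computable fun a => e (f a)) : Computable f := by
  classical
  have hsearch : ComputablePred fun p : α × ℕ =>
      (Encodable.decode (α := β) p.2).map e = some (e (f p.1)) :=
    (Primrec.eq.decide.to_comp.comp
      (Computable.option_map (Computable.decode.comp .snd) (he.comp .snd).to₂)
      (Computable.option_some.comp (hef.comp .fst))).computablePred
  have hex : ∀ a, ∃ n, (Encodable.decode (α := β) n).map e = some (e (f a)) := fun a =>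
    ⟨Encodable.encode (f a), by simp⟩
  refine Computable.option_some_iff.1
    ((Computable.decode.comp (Computable.find hsearch hex)).of_eq fun a => ?_)
  obtain ⟨b, hb, hba⟩ := Option.map_eq_some_iff.1 (Nat.find_spec (hex a))
  rw [hb, hinj hba]

/-- The denumeration `Denumerable.ofEncodableOfInfinite` numbers an element by the rank of its code
among all codes; the code is found again by searching for the position of that rank. -/
theorem computable_encode_ofEncodableOfInfinite (α : Type*) [code : Encodable α] [Infinite α]
    (h : ComputablePred fun n => n ∈ Set.range (code.encode : α → ℕ)) :
    @Computable α ℕ (@Primcodable.ofDenumerable α (Denumerable.ofEncodableOfInfinite α)) _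
      code.encode := by
  classical
  let rank : Denumerable α := Denumerable.ofEncodableOfInfinite α
  let IsCode : ℕ → Prop := fun n => n ∈ Set.range (code.encode : α → ℕ)
  have rank_eq_count (a : α) : rank.encode a = Nat.count IsCode (code.encode a) := by
    change @Nat.count _ (Encodable.decidableRangeEncode α) _ = _
    congr
  have hcount (a : α) : Nat.count IsCode (code.encode a + 1) = rank.encode a + 1 := by
    rw [Nat.count_succ, if_pos (show IsCode _ from Set.mem_range_self a), rank_eq_count]
  have hsearch : ComputablePred fun p : α × ℕ => Nat.count IsCode (p.2 + 1) = rank.encode p.1 + 1 :=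
    (Primrec.eq.decide.to_comp.comp
      ((computable_nat_count h).comp (Computable.succ.comp .snd))
      (Computable.succ.comp (Computable.encode.comp .fst))).computablePred
  have hex (a : α) : ∃ n, Nat.count IsCode (n + 1) = rank.encode a + 1 := ⟨_, hcount a⟩
  refine (Computable.find hsearch hex).of_eq fun a => ?_
  refine (Nat.find_eq_iff _).2 ⟨hcount a, fun n hn heq => ?_⟩
  have := Nat.count_monotone IsCode (Nat.succ_le_of_lt hn)
  rw [← rank_eq_count] at this
  simp only [Nat.succ_eq_add_one] at this
  omega

theorem primrec₂_nat_gcd : Primrec₂ Nat.gcd := by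
  have hdvd {f g : (ℕ × ℕ) × ℕ → ℕ} (hf : Primrec f) (hg : Primrec g) :
      PrimrecPred fun p => f p ∣ g p :=
    (Primrec.eq.comp (Primrec.nat_mod.comp hg hf) (.const 0)).of_eq fun p =>
      (Nat.dvd_iff_mod_eq_zero).symm
  have hcommon : PrimrecRel fun (p : ℕ × ℕ) d => d ∣ p.1 ∧ d ∣ p.2 :=
    (hdvd .snd (Primrec.fst.comp .fst)).and (hdvd .snd (Primrec.snd.comp .fst))
  refine (Primrec.nat_findGreatest (Primrec.nat_add.comp .fst .snd) hcommon).of_eq fun p => ?_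
  obtain ⟨m, n⟩ := p
  refine Nat.findGreatest_eq_iff.2 ⟨?_, fun _ => ⟨Nat.gcd_dvd_left m n, Nat.gcd_dvd_right m n⟩,
    fun d hd _ hdvd => ?_⟩
  · have := Nat.gcd_le_left n (m := m)
    have := Nat.gcd_le_right m (n := n)
    dsimp only
    rcases Nat.eq_zero_or_pos m with rfl | hm
    · simp
    · omega
  · rcases Nat.eq_zero_or_pos (m.gcd n) with h0 | hpos
    · obtain ⟨rfl, rfl⟩ := Nat.gcd_eq_zero_iff.1 h0
      simp_all
    · exact hd.not_ge (Nat.le_of_dvd hpos (Nat.dvd_gcd hdvd.1 hdvd.2))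

theorem primrec₂_nat_pow : Primrec₂ ((· ^ ·) : ℕ → ℕ → ℕ) :=
  Primrec₂.unpaired'.1 Nat.Primrec.pow

theorem primrec_int_natCast : Primrec ((↑) : ℕ → ℤ) :=
  Primrec.encode_iff.1 (Primrec.nat_mul.comp (.const 2) .id)

theorem primrec_int_natAbs : Primrec Int.natAbs := by
  refine (Primrec.nat_div.comp (Primrec.succ.comp .encode) (.const 2)).of_eq fun z => ?_
  cases z with
  | ofNat n => change (2 * n + 1) / 2 = n; omega
  | negSucc n => change (2 * n + 1 + 1) / 2 = n + 1; omega

theorem encode_rat (q : ℚ) :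
    Rat.instEncodable.encode q = Nat.pair (Encodable.encode q.num) q.den := rfl

theorem mem_range_encode_rat_iff (n : ℕ) :
    n ∈ Set.range (Rat.instEncodable.encode : ℚ → ℕ) ↔
      0 < n.unpair.2 ∧ (Denumerable.ofNat ℤ n.unpair.1).natAbs.gcd n.unpair.2 = 1 := by
  constructor
  · rintro ⟨q, rfl⟩
    simp only [encode_rat, Nat.unpair_pair, Denumerable.ofNat_encode]
    exact ⟨q.den_pos, q.reduced⟩
  · rintro ⟨hpos, hgcd⟩
    exact ⟨⟨Denumerable.ofNat ℤ n.unpair.1, n.unpair.2, hpos.ne', hgcd⟩, by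
      simp only [encode_rat, Denumerable.encode_ofNat, Nat.pair_unpair]⟩

/-- Computability on `ℚ` refers to the instance `Denumerable ℚ`, whose numbering differs from the
codes given by `Rat.instEncodable`; numerators and denominators can be read off only the latter. -/
theorem computable_encode_rat : Computable (Rat.instEncodable.encode : ℚ → ℕ) := by
  refine computable_encode_ofEncodableOfInfinite ℚ (PrimrecPred.computablePred ?_)
  have hden : Primrec fun n : ℕ => n.unpair.2 := Primrec.snd.comp .unpair
  have hnum : Primrec fun n : ℕ => (Denumerable.ofNat ℤ n.unpair.1).natAbs :=
    primrec_int_natAbs.comp ((Primrec.ofNat ℤ).comp (Primrec.fst.comp .unpair))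
  exact ((Primrec.nat_lt.comp (.const 0) hden).and
    (Primrec.eq.comp (primrec₂_nat_gcd.comp hnum hden) (.const 1))).of_eq fun n =>
      (mem_range_encode_rat_iff n).symm

theorem computable_rat_num : Computable Rat.num :=
  ((Computable.ofNat ℤ).comp
    (Computable.fst.comp (Computable.unpair.comp computable_encode_rat))).of_eq fun q => by
      simp only [encode_rat, Nat.unpair_pair, Denumerable.ofNat_encode]

theorem computable_rat_den : Computable Rat.den :=
  (Computable.snd.comp (Computable.unpair.comp computable_encode_rat)).of_eq
    fun q => by simp [encode_rat]

theorem computable_rat_natCast_div {α : Type*} [Primcodable α] {a b : α → ℕ} (ha : Computable a)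
    (hb : Computable b) (hb0 : ∀ x, b x ≠ 0) : Computable fun x => (a x : ℚ) / b x := by
  have hgcd : Computable fun x => (a x).gcd (b x) := primrec₂_nat_gcd.to_comp.comp ha hb
  refine computable_of_injective_comp (computable_rat_num.pair computable_rat_den)
    (fun q r h => Rat.ext (congrArg Prod.fst h) (congrArg Prod.snd h)) ?_
  refine ((primrec_int_natCast.to_comp.comp (Primrec.nat_div.to_comp.comp ha hgcd)).pair
    (Primrec.nat_div.to_comp.comp hb hgcd)).of_eq fun x => ?_
  obtain ⟨a', b', hcoprime, ha', hb'⟩ := Nat.exists_coprime (a x) (b x)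
  have hgcd_pos : 0 < (a x).gcd (b x) := Nat.gcd_pos_of_pos_right _ (Nat.pos_of_ne_zero (hb0 x))
  have hb'_pos : (0 : ℤ) < b' :=
    mod_cast Nat.pos_of_ne_zero fun h => hb0 x (by rw [hb', h, zero_mul])
  have hreduce : (a x : ℚ) / b x = ((a' : ℤ) : ℚ) / (b' : ℤ) := by
    have hnum : (a x : ℚ) = a' * (a x).gcd (b x) := mod_cast ha'
    have hden : (b x : ℚ) = b' * (a x).gcd (b x) := mod_cast hb'
    rw [Int.cast_natCast, Int.cast_natCast, div_eq_div_iff (mod_cast hb0 x) (mod_cast hb'_pos.ne')]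
    linear_combination (b' : ℚ) * hnum - (a' : ℚ) * hden
  refine Prod.ext ?_ (Int.natCast_inj.1 ?_)
  · rw [hreduce, Rat.num_div_eq_of_coprime (a := a') hb'_pos hcoprime,
      Nat.div_eq_of_eq_mul_left hgcd_pos ha']
  · rw [hreduce, Rat.den_div_eq_of_coprime (a := a') hb'_pos hcoprime,
      Nat.div_eq_of_eq_mul_left hgcd_pos hb']

theorem computable_inv_two_pow : Computable fun k : ℕ => (1 / 2 ^ k : ℚ) :=
  (computable_rat_natCast_div (.const 1) (primrec₂_nat_pow.to_comp.comp (.const 2) .id)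
    (by simp)).of_eq fun k => by simp

theorem computablePred_abs_le_abs_add_abs :
    ComputablePred fun p : ℚ × ℚ × ℚ => |p.1| ≤ |p.2.1| + |p.2.2| := by
  have hnum : Computable fun q : ℚ => q.num.natAbs :=
    primrec_int_natAbs.to_comp.comp computable_rat_num
  have hq : Computable fun p : ℚ × ℚ × ℚ => p.1 := .fst
  have hr : Computable fun p : ℚ × ℚ × ℚ => p.2.1 := Computable.fst.comp .snd
  have hs : Computable fun p : ℚ × ℚ × ℚ => p.2.2 := Computable.snd.comp .snd
  have hmul := Primrec.nat_mul.to_comp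
  have hcross : ComputablePred fun p : ℚ × ℚ × ℚ =>
      p.1.num.natAbs * (p.2.1.den * p.2.2.den) ≤
        (p.2.1.num.natAbs * p.2.2.den + p.2.1.den * p.2.2.num.natAbs) * p.1.den :=
    (Primrec.nat_le.decide.to_comp.comp
      (hmul.comp (hnum.comp hq)
        (hmul.comp (computable_rat_den.comp hr) (computable_rat_den.comp hs)))
      (hmul.comp (Primrec.nat_add.to_comp.comp
        (hmul.comp (hnum.comp hr) (computable_rat_den.comp hs))
        (hmul.comp (computable_rat_den.comp hr) (hnum.comp hs)))
        (computable_rat_den.comp hq))).computablePred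
  have abs_eq (q : ℚ) : |q| = q.num.natAbs / q.den := by
    rw [Nat.cast_natAbs, Int.cast_abs, ← abs_of_nonneg (Nat.cast_nonneg (α := ℚ) q.den), ← abs_div,
      Rat.num_div_den]
  refine hcross.of_eq fun ⟨q, r, s⟩ => ?_
  have hden (q : ℚ) : (0 : ℚ) < q.den := Nat.cast_pos.2 q.den_pos
  rw [abs_eq, abs_eq, abs_eq, div_add_div _ _ (hden r).ne' (hden s).ne',
    div_le_div_iff₀ (hden q) (mul_pos (hden r) (hden s))]
  norm_cast

/-! ### Clopen sets as finite lists of cylinders -/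

/-- The list of the first `t` values of `h`; for the rows of an effectively open set these are the
cylinders enumerated by time `t`. -/
def initSeg {α : Type*} (h : ℕ → α) (t : ℕ) : List α := (List.range t).map h

theorem computable_initSeg {α β : Type*} [Primcodable α] [Primcodable β] {h : α → ℕ → β}
    (hh : Computable₂ h) {t : α → ℕ} (ht : Computable t) :
    Computable fun a => initSeg (h a) (t a) := by
  have hstep : Computable₂ fun (a : α) (p : ℕ × List β) => p.2 ++ [h a p.1] :=
    Computable.list_concat.comp (Computable.snd.comp .snd)
      (hh.comp .fst (Computable.fst.comp .snd))
  refine (Computable.nat_rec ht (.const []) hstep).of_eq fun a => ?_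
  induction t a with
  | zero => rfl
  | succ n ih => simp only [ih, initSeg, List.range_succ, List.map_append, List.map_singleton]

theorem computable_initSeg_row {α β : Type*} [Primcodable α] [Primcodable β] {f : ℕ → ℕ → β}
    (hf : Computable₂ f) {n t : α → ℕ} (hn : Computable n) (ht : Computable t) :
    Computable fun a => initSeg (f (n a)) (t a) :=
  computable_initSeg (h := fun a => f (n a)) (hf.comp (hn.comp .fst) .snd) ht

/-- All binary strings of length `L`. -/
def boolStrings : ℕ → List (List Bool)
  | 0 => [[]]
  | L + 1 => (boolStrings L).map (List.cons true) ++ (boolStrings L).map (List.cons false)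

theorem mem_boolStrings {L : ℕ} {s : List Bool} : s ∈ boolStrings L ↔ s.length = L := by
  induction L generalizing s with
  | zero => simp [boolStrings]
  | succ L ih => rcases s with _ | ⟨_ | _, s⟩ <;> simp [boolStrings, ih]

theorem nodup_boolStrings (L : ℕ) : (boolStrings L).Nodup := by
  induction L with
  | zero => simp [boolStrings]
  | succ L ih =>
    refine (ih.map List.cons_injective).append (ih.map List.cons_injective) ?_
    simp [List.disjoint_left]

theorem primrec_boolStrings : Primrec boolStrings := by
  have hcons (b : Bool) : Primrec fun p : ℕ × List (List Bool) => p.2.map (List.cons b) :=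
    Primrec.list_map .snd (Primrec.list_cons.comp (.const b) .snd)
  have hstep : Primrec₂ fun (_ : ℕ) (A : List (List Bool)) =>
      A.map (List.cons true) ++ A.map (List.cons false) :=
    Primrec.list_append.comp (hcons true) (hcons false)
  refine (Primrec.nat_rec₁ [[]] hstep).of_eq fun L => ?_
  induction L with
  | zero => rfl
  | succ L ih => simp only [boolStrings, ← ih]

theorem mem_cyl_iff_prefix_pre {ω : ℕ → Bool} {s : List Bool} {L : ℕ} (h : s.length ≤ L) :
    ω ∈ Cyl s ↔ s <+: Pre ω L := by
  rw [List.prefix_iff_eq_take]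
  simp only [Cyl, Set.mem_ofPred_eq, Pre, ← List.map_take, List.take_range, min_eq_left h,
    List.ext_getElem_iff, List.length_map, List.length_range, List.getElem_map, List.getElem_range,
    true_and, Fin.forall_iff, List.get_eq_getElem]
  exact forall_congr' fun i => ⟨fun h h₁ _ => (h h₁).symm, fun h h₁ => (h h₁ h₁).symm⟩

theorem measurableSet_cyl (s : List Bool) : MeasurableSet (Cyl s) := by
  simp only [Cyl, Set.ofPred_forall]
  exact MeasurableSet.iInter fun i =>
    measurableSet_eq_fun (measurable_pi_apply _) measurable_const

theorem UniformMeasure.isProbabilityMeasure {μ : Measure (ℕ → Bool)} (hμ : UniformMeasure μ) :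
    IsProbabilityMeasure μ :=
  ⟨by simpa [Cyl] using hμ []⟩

/-- The clopen set given by a finite list of cylinders, which may overlap. -/
def cylUnion (l : List (List Bool)) : Set (ℕ → Bool) := ⋃ s ∈ l, Cyl s

theorem mem_cylUnion {ω : ℕ → Bool} {l : List (List Bool)} :
    ω ∈ cylUnion l ↔ ∃ s ∈ l, ω ∈ Cyl s := by
  simp [cylUnion]

theorem mem_cylUnion_initSeg {ω : ℕ → Bool} {h : ℕ → List Bool} {t : ℕ} :
    ω ∈ cylUnion (initSeg h t) ↔ ∃ i < t, ω ∈ Cyl (h i) := by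
  simp [cylUnion, initSeg]

theorem measurableSet_cylUnion (l : List (List Bool)) : MeasurableSet (cylUnion l) :=
  .biUnion (Set.to_countable _) fun s _ => measurableSet_cyl s

/-- A level beyond which the clopen set `cylUnion l` does not look at its argument. The total length
of the strings is used in place of their maximal length. -/
def cylLevel (l : List (List Bool)) : ℕ := l.flatten.length

theorem length_le_cylLevel {l : List (List Bool)} {s : List Bool} (h : s ∈ l) :
    s.length ≤ cylLevel l :=
  (List.sublist_flatten_of_mem h).length_le

theorem primrec_cylLevel : Primrec cylLevel :=
  Primrec.list_length.comp .list_flatten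

/-- A list of pairwise disjoint cylinders, all of the same level, whose union is the difference of
the clopen sets given by `l₁` and `l₂`. -/
def sdiffCylinders (l₁ l₂ : List (List Bool)) : List (List Bool) :=
  (boolStrings (cylLevel (l₁ ++ l₂))).filter fun s => (∃ y ∈ l₁, y <+: s) ∧ ¬∃ y ∈ l₂, y <+: s

theorem length_of_mem_sdiffCylinders {l₁ l₂ : List (List Bool)} {s : List Bool}
    (h : s ∈ sdiffCylinders l₁ l₂) : s.length = cylLevel (l₁ ++ l₂) :=
  mem_boolStrings.1 (List.mem_of_mem_filter h)

theorem primrec₂_sdiffCylinders : Primrec₂ sdiffCylinders := by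
  have hprefix : PrimrecRel fun y s : List Bool => y <+: s :=
    (Primrec.eq.comp .fst (Primrec.list_take.comp (Primrec.list_length.comp .fst) .snd)).of_eq
      fun p => List.prefix_iff_eq_take.symm
  have hmem : PrimrecRel fun (l : List (List Bool)) (s : List Bool) => ∃ y ∈ l, y <+: s :=
    PrimrecRel.exists_mem_list hprefix
  have hfilter : PrimrecRel fun (s : List Bool) (p : List (List Bool) × List (List Bool)) =>
      (∃ y ∈ p.1, y <+: s) ∧ ¬∃ y ∈ p.2, y <+: s :=
    (hmem.comp (Primrec.fst.comp .snd) .fst).and (hmem.comp (Primrec.snd.comp .snd) .fst).not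
  exact (PrimrecRel.listFilter hfilter).comp
    (primrec_boolStrings.comp (primrec_cylLevel.comp .list_append)) .id

theorem cylUnion_sdiff (l₁ l₂ : List (List Bool)) :
    cylUnion l₁ \ cylUnion l₂ = cylUnion (sdiffCylinders l₁ l₂) := by
  ext ω
  have mem_iff_pre {l : List (List Bool)} (hl : ∀ s ∈ l, s ∈ l₁ ++ l₂) :
      ω ∈ cylUnion l ↔ ∃ y ∈ l, y <+: Pre ω (cylLevel (l₁ ++ l₂)) :=
    mem_cylUnion.trans <| exists_congr fun s => and_congr_right fun hs =>
      mem_cyl_iff_prefix_pre (length_le_cylLevel (hl s hs))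
  have hlen : (Pre ω (cylLevel (l₁ ++ l₂))).length = cylLevel (l₁ ++ l₂) := by simp [Pre]
  have hsdiff : ω ∈ cylUnion l₁ \ cylUnion l₂ ↔
      Pre ω (cylLevel (l₁ ++ l₂)) ∈ sdiffCylinders l₁ l₂ := by
    rw [Set.mem_sdiff, mem_iff_pre fun s => List.mem_append_left l₂,
      mem_iff_pre fun s => List.mem_append_right l₁, sdiffCylinders, List.mem_filter,
      mem_boolStrings, decide_eq_true_iff]
    exact (and_iff_right hlen).symm
  rw [hsdiff, mem_cylUnion]
  constructor
  · exact fun h => ⟨_, h, (mem_cyl_iff_prefix_pre hlen.le).2 (List.prefix_refl _)⟩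
  · rintro ⟨s, hs, hω⟩
    have hs_len := length_of_mem_sdiffCylinders hs
    rwa [← ((mem_cyl_iff_prefix_pre hs_len.le).1 hω).eq_of_length (hs_len.trans hlen.symm)]

/-- The total weight `∑ 2^{-|s|}` of a finite list of strings. -/
noncomputable def listWeight (l : List (List Bool)) : ENNReal :=
  (l.map fun s => (2 : ENNReal)⁻¹ ^ s.length).sum

theorem listWeight_sdiffCylinders (l₁ l₂ : List (List Bool)) :
    listWeight (sdiffCylinders l₁ l₂) =
      (sdiffCylinders l₁ l₂).length * 2⁻¹ ^ cylLevel (l₁ ++ l₂) := by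
  rw [listWeight, List.map_congr_left fun s hs => by rw [length_of_mem_sdiffCylinders hs],
    List.map_const', List.sum_replicate, nsmul_eq_mul]

theorem pairwise_disjoint_cyl_sdiffCylinders (l₁ l₂ : List (List Bool)) :
    (sdiffCylinders l₁ l₂).Pairwise (Function.onFun Disjoint Cyl) := by
  refine ((nodup_boolStrings _).filter _).imp_of_mem fun {s t} hs ht hne => ?_
  refine Set.disjoint_left.2 fun ω hωs hωt => hne ?_
  rw [mem_cyl_iff_prefix_pre (length_of_mem_sdiffCylinders hs).le] at hωs
  rw [mem_cyl_iff_prefix_pre (length_of_mem_sdiffCylinders ht).le] at hωt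
  have hlen : s.length = t.length := by
    rw [length_of_mem_sdiffCylinders hs, length_of_mem_sdiffCylinders ht]
  exact (List.prefix_of_prefix_length_le hωs hωt hlen.le).eq_of_length hlen

theorem measure_cylUnion_of_pairwise_disjoint {μ : Measure (ℕ → Bool)} (hμ : UniformMeasure μ)
    {l : List (List Bool)} (hl : l.Pairwise (Function.onFun Disjoint Cyl)) :
    μ (cylUnion l) = listWeight l := by
  induction l with
  | nil => simp [cylUnion, listWeight]
  | cons s l ih =>
    obtain ⟨hs, hl⟩ := List.pairwise_cons.1 hl
    have hdisj : Disjoint (Cyl s) (cylUnion l) := Set.disjoint_iUnion₂_right.2 hs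
    have hcons : cylUnion (s :: l) = Cyl s ∪ cylUnion l := by simp [cylUnion, Set.iUnion_or,
      Set.iUnion_union_distrib]
    rw [hcons, measure_union hdisj (measurableSet_cylUnion l), hμ, ih hl, listWeight, listWeight,
      List.map_cons, List.sum_cons]

theorem measure_cylUnion_sdiff {μ : Measure (ℕ → Bool)} (hμ : UniformMeasure μ)
    (l₁ l₂ : List (List Bool)) :
    μ (cylUnion l₁ \ cylUnion l₂) = listWeight (sdiffCylinders l₁ l₂) := by
  rw [cylUnion_sdiff,
    measure_cylUnion_of_pairwise_disjoint hμ (pairwise_disjoint_cyl_sdiffCylinders l₁ l₂)]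

/-- The uniform measure of the clopen set `cylUnion l`, as a rational number. -/
def clopenMeasure (l : List (List Bool)) : ℚ := (sdiffCylinders l []).length / 2 ^ cylLevel l

theorem computable_clopenMeasure : Computable clopenMeasure :=
  (computable_rat_natCast_div
    (Primrec.list_length.comp (primrec₂_sdiffCylinders.comp .id (.const []))).to_comp
    (primrec₂_nat_pow.comp (.const 2) primrec_cylLevel).to_comp (by simp)).of_eq
    fun l => by simp [clopenMeasure]

theorem toReal_measure_cylUnion {μ : Measure (ℕ → Bool)} (hμ : UniformMeasure μ)
    (l : List (List Bool)) : (μ (cylUnion l)).toReal = clopenMeasure l := by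
  have h := measure_cylUnion_sdiff hμ l []
  rw [listWeight_sdiffCylinders] at h
  simpa [cylUnion, clopenMeasure, div_eq_mul_inv] using congrArg ENNReal.toReal h

/-! ### Moduli of convergence -/

theorem two_zpow_neg_eq_toReal (n : ℕ) :
    (2 : ℝ) ^ (-(n : ℤ)) = ((2 : ENNReal)⁻¹ ^ n).toReal := by
  simp [zpow_neg]

theorem inv_two_pow_den_le {δ : ℚ} (hδ : 0 < δ) : (2⁻¹ : ℝ) ^ δ.den ≤ δ := by
  have hnum : (1 : ℝ) ≤ δ.num := mod_cast Rat.num_pos.2 hδ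
  have hden : (0 : ℝ) < δ.den := mod_cast δ.den_pos
  calc (2⁻¹ : ℝ) ^ δ.den = 1 / 2 ^ δ.den := by rw [inv_pow, one_div]
    _ ≤ 1 / δ.den := one_div_le_one_div_of_le hden (mod_cast Nat.lt_two_pow_self.le)
    _ ≤ δ.num / δ.den := by gcongr
    _ = δ := (Rat.cast_def δ).symm

theorem totalSolovayTest_iff {x : ℕ → List Bool} :
    TotalSolovayTest x ↔ Computable x ∧ ∃ m : ℕ → ℕ, Computable m ∧
      ∀ k, ∑' n : {n // m k ≤ n}, (2 : ENNReal)⁻¹ ^ (x n).length ≤ 2⁻¹ ^ k := by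
  have hfin (n : ℕ) : (2 : ENNReal)⁻¹ ^ n ≠ ⊤ := by simp
  simp only [TotalSolovayTest, SolovayTest, two_zpow_neg_eq_toReal]
  constructor
  · rintro ⟨⟨hx, hsum⟩, m, hm, htail⟩
    refine ⟨hx, fun k => m (1 / 2 ^ k), hm.comp computable_inv_two_pow, fun k => ?_⟩
    have hsum_tail : Summable fun n : {n // m (1 / 2 ^ k) ≤ n} =>
        ((2 : ENNReal)⁻¹ ^ (x n).length).toReal := hsum.subtype {n | m (1 / 2 ^ k) ≤ n}
    have h := ENNReal.ofReal_le_ofReal (htail (1 / 2 ^ k) (by positivity))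
    rw [ENNReal.ofReal_tsum_of_nonneg (fun _ => ENNReal.toReal_nonneg) hsum_tail] at h
    have hbound : (((1 / 2 ^ k : ℚ)) : ℝ) = ((2 : ENNReal)⁻¹ ^ k).toReal := by simp
    simpa only [hbound, ENNReal.ofReal_toReal (hfin _)] using h
  · rintro ⟨hx, m, hm, htail⟩
    have htail_ne_top (k : ℕ) : ∑' n : {n // m k ≤ n}, (2 : ENNReal)⁻¹ ^ (x n).length ≠ ⊤ :=
      ne_top_of_le_ne_top (hfin k) (htail k)
    refine ⟨⟨hx, ?_⟩, fun δ => m δ.den, hm.comp computable_rat_den, fun δ hδ => ?_⟩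
    · have h : Summable ((fun n => ((2 : ENNReal)⁻¹ ^ (x n).length).toReal) ∘
          ((↑) : Set.Ici (m 0) → ℕ)) := ENNReal.summable_toReal (htail_ne_top 0)
      rw [← Set.compl_Iio] at h
      exact (Set.finite_Iio (m 0)).summable_compl_iff.1 h
    · rw [← ENNReal.tsum_toReal_eq fun n => hfin _]
      refine (ENNReal.toReal_mono (hfin _) (htail δ.den)).trans ?_
      simpa using inv_two_pow_den_le hδ

theorem monotone_cylUnion_initSeg (h : ℕ → List Bool) :
    Monotone fun t => cylUnion (initSeg h t) := fun s t hst ω hω => by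
  rw [mem_cylUnion_initSeg] at hω ⊢
  exact hω.imp fun i hi => ⟨hi.1.trans_le hst, hi.2⟩

theorem effOpen_eq_iUnion (f : ℕ → ℕ → List Bool) (n : ℕ) :
    EffOpen f n = ⋃ t, cylUnion (initSeg (f n) t) := by
  ext ω
  simp only [EffOpen, Set.mem_iUnion, mem_cylUnion_initSeg]
  exact ⟨fun ⟨i, hi⟩ => ⟨i + 1, i, i.lt_succ_self, hi⟩, fun ⟨_, i, _, hi⟩ => ⟨i, hi⟩⟩

theorem cylUnion_initSeg_subset_effOpen (f : ℕ → ℕ → List Bool) (n t : ℕ) :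
    cylUnion (initSeg (f n) t) ⊆ EffOpen f n :=
  effOpen_eq_iUnion f n ▸ Set.subset_iUnion (fun t => cylUnion (initSeg (f n) t)) t

theorem tendsto_measure_cylUnion_initSeg (μ : Measure (ℕ → Bool)) (f : ℕ → ℕ → List Bool) (n : ℕ) :
    Tendsto (fun t => μ (cylUnion (initSeg (f n) t))) atTop (nhds (μ (EffOpen f n))) :=
  effOpen_eq_iUnion f n ▸ tendsto_measure_iUnion_atTop (monotone_cylUnion_initSeg (f n))

theorem measure_sdiff_le_inv_two_pow_iff {α : Type*} [MeasurableSpace α] {μ : Measure α}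
    [IsFiniteMeasure μ] {s t : Set α} (hs : MeasurableSet s) (hst : s ⊆ t) (k : ℕ) :
    μ (t \ s) ≤ 2⁻¹ ^ k ↔ (μ t).toReal - (μ s).toReal ≤ 2⁻¹ ^ k := by
  rw [measure_sdiff hst hs.nullMeasurableSet (measure_ne_top μ s),
    ← ENNReal.toReal_sub_of_le (measure_mono hst) (measure_ne_top μ t),
    ← ENNReal.toReal_le_toReal (by finiteness) (by simp)]
  simp

/-- The approximation `g` to the measure of row `p.1` of `f` is reached, up to `2^{-(p.2 + 1)}`, by
the cylinders enumerated before time `t`. The absolute values are harmless, the measures being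
nonnegative, and let `computablePred_abs_le_abs_add_abs` decide this relation. -/
def StageReaches (f : ℕ → ℕ → List Bool) (g : ℕ → ℚ → ℚ) (p : ℕ × ℕ) (t : ℕ) : Prop :=
  |g p.1 (1 / 2 ^ (p.2 + 2))| ≤
    |clopenMeasure (initSeg (f p.1) t)| + |(1 / 2 ^ (p.2 + 1) : ℚ)|

theorem computablePred_stageReaches {f : ℕ → ℕ → List Bool} (hf : Computable₂ f) {g : ℕ → ℚ → ℚ}
    (hg : Computable₂ g) :
    ComputablePred fun p : (ℕ × ℕ) × ℕ => StageReaches f g p.1 p.2 := by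
  have hn : Computable fun p : (ℕ × ℕ) × ℕ => p.1.1 := Computable.fst.comp .fst
  have hk : Computable fun p : (ℕ × ℕ) × ℕ => p.1.2 + 1 :=
    Computable.succ.comp (Computable.snd.comp .fst)
  exact (computablePred_abs_le_abs_add_abs.decide.comp
    ((hg.comp hn (computable_inv_two_pow.comp (Computable.succ.comp hk))).pair
      ((computable_clopenMeasure.comp (computable_initSeg_row hf hn .snd)).pair
        (computable_inv_two_pow.comp hk)))).computablePred

theorem stageReaches_iff {μ : Measure (ℕ → Bool)} (hμ : UniformMeasure μ) {f : ℕ → ℕ → List Bool}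
    {g : ℕ → ℚ → ℚ} {n k t : ℕ} :
    StageReaches f g (n, k) t ↔ |(g n (1 / 2 ^ (k + 2)) : ℝ)| ≤
      (μ (cylUnion (initSeg (f n) t))).toReal + 2 * 2⁻¹ ^ (k + 2) := by
  have hpow : (2 * 2⁻¹ ^ (k + 2) : ℝ) = |1 / 2 ^ (k + 1)| := by
    rw [abs_of_pos (by positivity), one_div, ← inv_pow]; ring
  rw [← abs_of_nonneg (ENNReal.toReal_nonneg (a := μ (cylUnion _))), toReal_measure_cylUnion hμ,
    hpow, StageReaches, ← Rat.cast_le (K := ℝ)]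
  push_cast
  rfl

theorem SchnorrTest.exists_modulus {μ : Measure (ℕ → Bool)} (hμ : UniformMeasure μ)
    {f : ℕ → ℕ → List Bool} (hf : SchnorrTest μ f) :
    ∃ T : ℕ → ℕ → ℕ, Computable₂ T ∧
      ∀ n k, μ (EffOpen f n \ cylUnion (initSeg (f n) (T n k))) ≤ 2⁻¹ ^ k := by
  classical
  obtain ⟨⟨hf, -⟩, g, hg, happrox⟩ := hf
  have := hμ.isProbabilityMeasure
  have hpos (k : ℕ) : (0 : ℝ) < 2⁻¹ ^ (k + 2) := by positivity
  have hg_near (n k : ℕ) : |(|(g n (1 / 2 ^ (k + 2)) : ℝ)|) - (μ (EffOpen f n)).toReal| ≤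
      2⁻¹ ^ (k + 2) := by
    have h := happrox n (1 / 2 ^ (k + 2)) (by positivity)
    rw [← abs_of_nonneg (ENNReal.toReal_nonneg (a := μ (EffOpen f n)))]
    refine (abs_abs_sub_abs_le _ _).trans (h.trans_eq ?_)
    simp
  have hex : ∀ p : ℕ × ℕ, ∃ t, StageReaches f g p t := by
    rintro ⟨n, k⟩
    have hlim := (ENNReal.tendsto_toReal (measure_ne_top μ (EffOpen f n))).comp
      (tendsto_measure_cylUnion_initSeg μ f n)
    obtain ⟨t, ht⟩ := (hlim.eventually (lt_mem_nhds (sub_lt_self _ (hpos k)))).exists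
    rw [Function.comp_apply] at ht
    exact ⟨t, (stageReaches_iff hμ).2 (by linarith [(abs_le.1 (hg_near n k)).2])⟩
  refine ⟨fun n k => Nat.find (hex (n, k)), Computable.find (computablePred_stageReaches hf hg) hex,
    fun n k => ?_⟩
  have hreach := (stageReaches_iff hμ).1 (Nat.find_spec (hex (n, k)))
  have hpow : (2⁻¹ : ℝ) ^ k = 4 * 2⁻¹ ^ (k + 2) := by ring
  rw [measure_sdiff_le_inv_two_pow_iff (measurableSet_cylUnion _)
    (cylUnion_initSeg_subset_effOpen f n _), hpow]
  linarith [(abs_le.1 (hg_near n k)).1, hpos k]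

theorem schnorrTest_of_modulus {μ : Measure (ℕ → Bool)} (hμ : UniformMeasure μ)
    {f : ℕ → ℕ → List Bool} (hf : MLTest μ f) {T : ℕ → ℕ → ℕ} (hT : Computable₂ T)
    (hmod : ∀ n k, μ (EffOpen f n \ cylUnion (initSeg (f n) (T n k))) ≤ 2⁻¹ ^ k) :
    SchnorrTest μ f := by
  have := hμ.isProbabilityMeasure
  have hstage : Computable fun p : ℕ × ℚ => initSeg (f p.1) (T p.1 p.2.den) :=
    computable_initSeg_row hf.1 .fst (hT.comp .fst (computable_rat_den.comp .snd))
  refine ⟨hf, fun n ε => clopenMeasure (initSeg (f n) (T n ε.den)),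
    computable_clopenMeasure.comp hstage, fun n ε hε => ?_⟩
  have hsub := cylUnion_initSeg_subset_effOpen f n (T n ε.den)
  have hgap := (measure_sdiff_le_inv_two_pow_iff (measurableSet_cylUnion _) hsub _).1
    (hmod n ε.den)
  rw [← toReal_measure_cylUnion hμ, abs_sub_comm,
    abs_of_nonneg (sub_nonneg.2 (ENNReal.toReal_mono (measure_ne_top _ _) (measure_mono hsub)))]
  exact hgap.trans (inv_two_pow_den_le hε)

/-! ### Solovay tests from computable sequences of finite lists -/

/-- The strings of all the lists `B j`, arranged in one sequence along the pairing function. The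
positions beyond the end of a list are filled by strings as long as the position itself, so that
they contribute a summable weight. -/
def blockSeq (B : ℕ → List (List Bool)) (q : ℕ) : List Bool :=
  (B q.unpair.1)[q.unpair.2]?.getD (List.replicate q false)

theorem computable_blockSeq {B : ℕ → List (List Bool)} (hB : Computable B) :
    Computable (blockSeq B) := by
  have hpad : Primrec fun q : ℕ => List.replicate q false :=
    (Primrec.list_map .list_range (Primrec.const false).to₂).of_eq fun q => by simp
  exact Computable.option_getD
    (Computable.list_getElem?.comp (hB.comp (Computable.fst.comp .unpair))
      (Computable.snd.comp .unpair))
    hpad.to_comp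

theorem PassesSolovay.finite_setOf_mem_cylUnion {B : ℕ → List (List Bool)} {ω : ℕ → Bool}
    (h : PassesSolovay (blockSeq B) ω) : {j | ω ∈ cylUnion (B j)}.Finite := by
  refine (h.image fun q => q.unpair.1).subset fun j hj => ?_
  obtain ⟨s, hs, hω⟩ := mem_cylUnion.1 hj
  obtain ⟨p, hp⟩ := List.mem_iff_getElem?.1 hs
  have hblock : blockSeq B (Nat.pair j p) = s := by simp [blockSeq, hp]
  refine ⟨Nat.pair j p, ?_, by simp⟩
  rwa [Set.mem_ofPred_eq, hblock]

/-- A position of `blockSeq B` beyond which no string of `B j` with `j < J` occurs. -/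
def blockBound (B : ℕ → List (List Bool)) : ℕ → ℕ
  | 0 => 0
  | J + 1 => blockBound B J + Nat.pair J (B J).length + 1

theorem computable_blockBound {B : ℕ → List (List Bool)} (hB : Computable B) :
    Computable (blockBound B) := by
  have hj : Computable fun p : ℕ × ℕ × ℕ => p.2.1 := Computable.fst.comp .snd
  have hstep : Computable fun p : ℕ × ℕ × ℕ => p.2.2 + Nat.pair p.2.1 (B p.2.1).length + 1 :=
    Computable.succ.comp (Primrec.nat_add.to_comp.comp (Computable.snd.comp .snd)
      (Primrec₂.natPair.to_comp.comp hj (Computable.list_length.comp (hB.comp hj))))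
  refine (Computable.nat_rec .id (.const 0) hstep.to₂).of_eq fun J => ?_
  induction J with
  | zero => rfl
  | succ J ih => simp only [id_eq, blockBound] at ih ⊢; rw [ih]

theorem le_blockBound (B : ℕ → List (List Bool)) (J : ℕ) : J ≤ blockBound B J := by
  induction J with
  | zero => exact le_rfl
  | succ J ih => rw [blockBound]; omega

theorem pair_lt_blockBound {B : ℕ → List (List Bool)} {J j p : ℕ} (hj : j < J)
    (hp : p < (B j).length) : Nat.pair j p < blockBound B J := by
  induction J with
  | zero => exact absurd hj j.not_lt_zero
  | succ J ih =>
    rw [blockBound]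
    rcases Nat.lt_succ_iff_lt_or_eq.1 hj with h | rfl
    · have := ih h
      omega
    · have := Nat.pair_lt_pair_right j hp
      omega

theorem tsum_getElem?_getD {α : Type*} [AddCommMonoid α] [TopologicalSpace α] (l : List α) :
    ∑' p : ℕ, l[p]?.getD 0 = l.sum := by
  rw [tsum_eq_sum (s := Finset.range l.length) (by simp +contextual), Finset.sum_range,
    ← Fin.sum_univ_getElem]
  simp

theorem tsum_ite_le_inv_two_pow (J : ℕ) :
    ∑' q : ℕ, (if J ≤ q then (2 : ENNReal)⁻¹ ^ q else 0) = 2 * 2⁻¹ ^ J := by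
  induction J with
  | zero => simp [ENNReal.tsum_geometric, ENNReal.one_sub_inv_two]
  | succ J ih =>
    rw [tsum_eq_zero_add' ENNReal.summable, if_neg J.not_succ_le_zero, zero_add, pow_succ,
      ← mul_assoc, ← ih, ← ENNReal.tsum_mul_right]
    simp only [Nat.add_le_add_iff_right, ite_mul, zero_mul, pow_succ]

section Tail

variable (B : ℕ → List (List Bool)) (J : ℕ)

/-- The weight of the string at position `q` of `blockSeq B`, counted only when that string comes
from one of the lists `B j` with `J ≤ j`. -/
noncomputable def lateWeight (q : ℕ) : ENNReal :=
  if J ≤ q.unpair.1 then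
    ((B q.unpair.1).map fun s => (2 : ENNReal)⁻¹ ^ s.length)[q.unpair.2]?.getD 0
  else 0

variable {B J}

theorem tsum_lateWeight_le (hB : ∀ j, listWeight (B j) ≤ 2⁻¹ ^ j) :
    ∑' q, lateWeight B J q ≤ 2 * 2⁻¹ ^ J := by
  rw [← tsum_ite_le_inv_two_pow, ← Nat.pairEquiv.tsum_eq, ENNReal.tsum_prod']
  refine ENNReal.tsum_le_tsum fun j => ?_
  simp only [lateWeight, Nat.pairEquiv_apply, Function.uncurry_apply_pair, Nat.unpair_pair]
  split_ifs
  · exact (tsum_getElem?_getD _).trans_le (hB j)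
  · simp

theorem inv_two_pow_length_blockSeq_le {q : ℕ} (hq : blockBound B J ≤ q) :
    (2 : ENNReal)⁻¹ ^ (blockSeq B q).length ≤
      (if J ≤ q then (2 : ENNReal)⁻¹ ^ q else 0) + lateWeight B J q := by
  by_cases hp : q.unpair.2 < (B q.unpair.1).length
  · have hJ : J ≤ q.unpair.1 := by
      by_contra! hlt
      have := pair_lt_blockBound hlt hp
      rw [Nat.pair_unpair] at this
      omega
    simp [blockSeq, lateWeight, hp, hJ]
  · have hnone : (B q.unpair.1)[q.unpair.2]? = none := by simpa using hp
    simp [blockSeq, hnone, (le_blockBound B J).trans hq]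

theorem tsum_blockSeq_tail_le (hB : ∀ j, listWeight (B j) ≤ 2⁻¹ ^ j) :
    ∑' q : {q // blockBound B J ≤ q}, (2 : ENNReal)⁻¹ ^ (blockSeq B q).length ≤ 4 * 2⁻¹ ^ J :=
  calc ∑' q : {q // blockBound B J ≤ q}, (2 : ENNReal)⁻¹ ^ (blockSeq B q).length
    _ ≤ ∑' q : {q // blockBound B J ≤ q},
          ((if J ≤ (q : ℕ) then (2 : ENNReal)⁻¹ ^ (q : ℕ) else 0) + lateWeight B J q) :=
        ENNReal.tsum_le_tsum fun q => inv_two_pow_length_blockSeq_le q.2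
    _ ≤ ∑' q, ((if J ≤ q then (2 : ENNReal)⁻¹ ^ q else 0) + lateWeight B J q) :=
        ENNReal.tsum_comp_le_tsum_of_injective Subtype.val_injective _
    _ ≤ 2 * 2⁻¹ ^ J + 2 * 2⁻¹ ^ J := by
        rw [ENNReal.tsum_add, tsum_ite_le_inv_two_pow]
        gcongr
        exact tsum_lateWeight_le hB
    _ = 4 * 2⁻¹ ^ J := by ring

end Tail

theorem totalSolovayTest_blockSeq {B : ℕ → List (List Bool)} (hB : Computable B)
    (hweight : ∀ j, listWeight (B j) ≤ 2⁻¹ ^ j) : TotalSolovayTest (blockSeq B) := by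
  refine totalSolovayTest_iff.2 ⟨computable_blockSeq hB, fun k => blockBound B (k + 2),
    (computable_blockBound hB).comp (Computable.succ.comp .succ), fun k => ?_⟩
  refine (tsum_blockSeq_tail_le hweight).trans_eq ?_
  rw [pow_add, mul_left_comm, show (4 : ENNReal) = 2 ^ 2 by norm_num, ← mul_pow,
    ENNReal.mul_inv_cancel two_ne_zero ENNReal.ofNat_ne_top, one_pow, mul_one]

/-! ### Schnorr tests and total Solovay tests -/

theorem measure_iUnion_cyl_le {μ : Measure (ℕ → Bool)} (hμ : UniformMeasure μ) {ι : Type*}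
    [Countable ι] (x : ι → List Bool) :
    μ (⋃ i, Cyl (x i)) ≤ ∑' i, (2 : ENNReal)⁻¹ ^ (x i).length :=
  (measure_iUnion_le _).trans_eq (tsum_congr fun i => hμ (x i))

theorem TotalSolovayTest.exists_schnorrTest_tails {μ : Measure (ℕ → Bool)} (hμ : UniformMeasure μ)
    {x : ℕ → List Bool} (hx : TotalSolovayTest x) :
    ∃ m : ℕ → ℕ, SchnorrTest μ fun n i => x (m n + i) := by
  obtain ⟨hx, m, hm, htail⟩ := totalSolovayTest_iff.1 hx
  have hmeasure (k : ℕ) : μ (⋃ i : {i // m k ≤ i}, Cyl (x i)) ≤ 2⁻¹ ^ k :=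
    (measure_iUnion_cyl_le hμ _).trans (htail k)
  have hf : Computable₂ fun n i => x (m n + i) :=
    hx.comp (Primrec.nat_add.to_comp.comp (hm.comp .fst) .snd)
  refine ⟨m, schnorrTest_of_modulus hμ ⟨hf, fun n => ?_⟩ (T := fun _ k => m k) (hm.comp .snd)
    fun n k => ?_⟩
  · refine (measure_mono (Set.iUnion_subset fun i => ?_)).trans (hmeasure n)
    exact Set.subset_iUnion_of_subset ⟨m n + i, Nat.le_add_right _ _⟩ subset_rfl
  · refine (measure_mono fun ω hω => ?_).trans (hmeasure k)
    obtain ⟨i, hi⟩ := Set.mem_iUnion.1 hω.1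
    have hik : m k ≤ i := le_of_not_gt fun h => hω.2 (mem_cylUnion_initSeg.2 ⟨i, h, hi⟩)
    exact Set.mem_iUnion.2 ⟨⟨m n + i, hik.trans (Nat.le_add_left _ _)⟩, hi⟩

theorem SchnorrRandom.passesSolovay {μ : Measure (ℕ → Bool)} (hμ : UniformMeasure μ)
    {ω : ℕ → Bool} (hω : SchnorrRandom μ ω) {x : ℕ → List Bool} (hx : TotalSolovayTest x) :
    PassesSolovay x ω := by
  obtain ⟨m, htest⟩ := hx.exists_schnorrTest_tails hμ
  obtain ⟨n, hn⟩ := hω _ htest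
  refine (Set.finite_lt_nat (m n)).subset fun i hi => ?_
  by_contra hle
  refine hn (Set.mem_iUnion.2 ⟨i - m n, ?_⟩)
  beta_reduce
  rwa [Nat.add_sub_cancel' (not_lt.1 hle)]

theorem SchnorrTest.exists_exhaustion {μ : Measure (ℕ → Bool)} (hμ : UniformMeasure μ)
    {f : ℕ → ℕ → List Bool} (hf : SchnorrTest μ f) :
    ∃ s : ℕ → ℕ → ℕ, Computable₂ s ∧ (∀ n, s n 0 = 0) ∧ (∀ n k, k ≤ s n k) ∧
      ∀ n k, μ (EffOpen f (Nat.pair n 0) \ cylUnion (initSeg (f (Nat.pair n 0)) (s n k))) ≤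
        2⁻¹ ^ Nat.pair n k := by
  obtain ⟨T, hT, hgap⟩ := hf.exists_modulus hμ
  have hrow : Computable fun p : ℕ × ℕ => Nat.pair p.1 0 :=
    Primrec₂.natPair.to_comp.comp .fst (.const 0)
  -- The factor `k` makes stage `0` empty; the missing mass is then that of row `⟨n, 0⟩`, for which
  -- the Martin-Löf bound is already the required one.
  refine ⟨fun n k => k * (T (Nat.pair n 0) (Nat.pair n k) + 1),
    Primrec.nat_mul.to_comp.comp .snd
      (Computable.succ.comp (hT.comp hrow Primrec₂.natPair.to_comp)),
    fun n => zero_mul _, fun n k => Nat.le_mul_of_pos_right k (Nat.succ_pos _), fun n k => ?_⟩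
  cases k with
  | zero => exact (measure_mono Set.sdiff_subset).trans (hf.1.2 _)
  | succ k =>
    refine (measure_mono (Set.sdiff_subset_sdiff_right
      (monotone_cylUnion_initSeg _ ?_))).trans (hgap _ _)
    exact (Nat.le_succ _).trans (Nat.le_mul_of_pos_left _ k.succ_pos)

theorem SchnorrTest.exists_blocks {μ : Measure (ℕ → Bool)} (hμ : UniformMeasure μ)
    {f : ℕ → ℕ → List Bool} (hf : SchnorrTest μ f) :
    ∃ B : ℕ → List (List Bool), Computable B ∧ (∀ j, listWeight (B j) ≤ 2⁻¹ ^ j) ∧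
      ∀ n, EffOpen f (Nat.pair n 0) ⊆ ⋃ k, cylUnion (B (Nat.pair n k)) := by
  obtain ⟨s, hs, hs_zero, hs_le, hgap⟩ := hf.exists_exhaustion hμ
  let stage (n k : ℕ) : List (List Bool) := initSeg (f (Nat.pair n 0)) (s n k)
  have hstage : Computable₂ stage :=
    computable_initSeg_row hf.1.1 (Primrec₂.natPair.to_comp.comp .fst (.const 0)) hs
  have hn : Computable fun j : ℕ => j.unpair.1 := Computable.fst.comp .unpair
  have hk : Computable fun j : ℕ => j.unpair.2 := Computable.snd.comp .unpair
  refine ⟨fun j => sdiffCylinders (stage j.unpair.1 (j.unpair.2 + 1))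
      (stage j.unpair.1 j.unpair.2),
    primrec₂_sdiffCylinders.to_comp.comp (hstage.comp hn (Computable.succ.comp hk))
      (hstage.comp hn hk), fun j => ?_, fun n ω hω => ?_⟩
  · rw [← measure_cylUnion_sdiff hμ]
    refine (measure_mono (Set.sdiff_subset_sdiff_left
      (cylUnion_initSeg_subset_effOpen f _ _))).trans ((hgap _ _).trans_eq ?_)
    rw [Nat.pair_unpair]
  · obtain ⟨i, hi⟩ := Set.mem_iUnion.1 hω
    have hfirst : ω ∉ cylUnion (stage n 0) := by simp [stage, mem_cylUnion_initSeg, hs_zero]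
    have hlater : ω ∈ cylUnion (stage n (i + 1)) :=
      mem_cylUnion_initSeg.2 ⟨i, hs_le n (i + 1), hi⟩
    obtain ⟨k, hout, hin⟩ := Nat.exists_not_and_succ_of_not_zero_of_exists
      (p := fun k => ω ∈ cylUnion (stage n k)) hfirst ⟨_, hlater⟩
    refine Set.mem_iUnion.2 ⟨k, ?_⟩
    simp only [Nat.unpair_pair, ← cylUnion_sdiff]
    exact ⟨hin, hout⟩

theorem schnorrRandom_of_passesSolovay {μ : Measure (ℕ → Bool)} (hμ : UniformMeasure μ)
    {ω : ℕ → Bool} (hω : ∀ x, TotalSolovayTest x → PassesSolovay x ω) : SchnorrRandom μ ω := by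
  intro f hf
  by_contra! hmem
  obtain ⟨B, hB, hweight, hcover⟩ := hf.exists_blocks hμ
  have hfin := (hω _ (totalSolovayTest_blockSeq hB hweight)).finite_setOf_mem_cylUnion
  refine Set.infinite_univ ((hfin.image fun j => j.unpair.1).subset fun n _ => ?_)
  obtain ⟨k, hk⟩ := Set.mem_iUnion.1 (hcover n (hmem (Nat.pair n 0)))
  exact ⟨Nat.pair n k, hk, by simp⟩

/-- `ω` is Schnorr random with respect to the uniform Bernoulli measure
iff it passes every total Solovay test. -/
theorem schnorr_random_iff_passes_all_total_solovay_tests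
    (μ : Measure (ℕ → Bool)) (hμ : UniformMeasure μ) [IsProbabilityMeasure μ]
    (ω : ℕ → Bool) :
    SchnorrRandom μ ω ↔ ∀ x : ℕ → List Bool, TotalSolovayTest x → PassesSolovay x ω :=
  ⟨fun h _ hx => h.passesSolovay hμ hx, schnorrRandom_of_passesSolovay hμ⟩
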